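/- arXiv:1605.04027 — 2 statements merged into one kernel-verified Lean document; each statement's English description precedes it below -/
import Mathlib

section
/- Let n ≥ 2, let Z ⊂ ℝⁿ be a finite set with at least two elements, let d = min{|z − z′| : z, z′ ∈ Z, z ≠ z′}, and let α ∈ (−n, n). Define ρ : ℝⁿ → (0,∞) by ρ(x) = |x − z|^α if |x − z| < d/2 for some z ∈ Z (such a z, if it exists, is unique), and ρ(x) = 1 otherwise. Then ρ satisfies the Muckenhoupt A₂ condition. -/
/-!
Write `s = |α| ∈ [0, n)`. Off the null set `Z`, the weights `ρ` and `ρ⁻¹` form, in one order or the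
other, a pair `A`, `B` with `A = ‖x - z‖ ^ s` and `B = ‖x - z‖ ^ (-s)` near each `z ∈ Z`, and
`A = B = 1` elsewhere. Since `Z` is `d`-separated, `A ≤ L` and `A ≤ L * ‖x - z‖ ^ s` for every
`z ∈ Z` with one constant `L`, while `B ≤ 1 + ∑ z ∈ Z, ‖x - z‖ ^ (-s)`. Hence
`(∫ A) * (∫ B) ≤ L * |D|² + L * ∑ z ∈ Z, (∫ ‖x - z‖ ^ s) * (∫ ‖x - z‖ ^ (-s))` over any ball `D`, and
only the classical `A₂` bound for a power weight with one singularity is needed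
(`exists_A2_bound_norm_sub_rpow`). That bound follows from the polar-coordinate value of
`∫ ‖x‖ ^ (-s)` over a ball around `0` when the ball is close to the singularity compared with its
radius, and from the near-constancy of `‖x - z‖` on the ball otherwise. This treats small and
large balls, and balls meeting several of the singularities, all at once.
-/


open MeasureTheory Metric ENNReal

/-- The Muckenhoupt `A₂` condition for a weight `ω : ℝⁿ → [0,∞]`: there is a constant
`C > 0` (finite) such that for every open Euclidean ball `B`,
`(∫_B ω) · (∫_B ω⁻¹) ≤ C · |B|²`. -/
def IsA2 {n : ℕ} (ω : EuclideanSpace ℝ (Fin n) → ℝ≥0∞) : Prop :=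
  ∃ C : ℝ≥0∞, 0 < C ∧ C ≠ ⊤ ∧
    ∀ (c : EuclideanSpace ℝ (Fin n)) (r : ℝ), 0 < r →
      (∫⁻ x in ball c r, ω x) * (∫⁻ x in ball c r, (ω x)⁻¹) ≤
        C * (volume (ball c r)) ^ 2

/-- In polar coordinates, the integral of `‖x‖ ^ (-s)` over the ball of radius `R` centred at the
singularity is `n / (n - s) * R ^ (-s)` times the volume of the ball. -/
lemma lintegral_ball_zero_norm_rpow_neg {n : ℕ} (hn : 1 ≤ n) {s : ℝ} (hs : s < n) {R : ℝ}
    (hR : 0 < R) :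
    ∫⁻ x in ball (0 : EuclideanSpace ℝ (Fin n)) R, ENNReal.ofReal (‖x‖ ^ (-s)) =
      ENNReal.ofReal (n / (n - s) * R ^ (-s)) *
        volume (ball (0 : EuclideanSpace ℝ (Fin n)) R) := by
  have : Nontrivial (EuclideanSpace ℝ (Fin n)) := by
    have : Nonempty (Fin n) := ⟨⟨0, hn⟩⟩
    infer_instance
  have hpow : ∀ y ∈ Set.Ioo 0 R, y ^ (n - 1) * y ^ (-s) = y ^ ((n : ℝ) - 1 - s) := by
    intro y hy
    rw [← Real.rpow_natCast, ← Real.rpow_add hy.1, Nat.cast_sub hn]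
    simp [sub_eq_add_neg]
  have hexp : -1 < (n : ℝ) - 1 - s := by linarith
  have hint : IntegrableOn (fun x : EuclideanSpace ℝ (Fin n) => ‖x‖ ^ (-s)) (ball 0 R) := by
    rw [integrableOn_fun_norm_addHaar volume (f := fun y : ℝ => y ^ (-s))]
    simp only [finrank_euclideanSpace_fin, smul_eq_mul]
    rw [integrableOn_congr_fun hpow measurableSet_Ioo, ← integrableOn_Ioc_iff_integrableOn_Ioo,
      ← intervalIntegrable_iff_integrableOn_Ioc_of_le hR.le]
    exact intervalIntegral.intervalIntegrable_rpow' hexp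
  have hval : ∫ x in ball (0 : EuclideanSpace ℝ (Fin n)) R, ‖x‖ ^ (-s) =
      n * (volume.real (ball (0 : EuclideanSpace ℝ (Fin n)) 1) * (R ^ ((n : ℝ) - s) / (n - s))) := by
    have h1 : ∫ x in ball (0 : EuclideanSpace ℝ (Fin n)) R, ‖x‖ ^ (-s) =
        ∫ x : EuclideanSpace ℝ (Fin n), (Set.Iio R).indicator (fun y : ℝ => y ^ (-s)) ‖x‖ := by
      rw [← integral_indicator measurableSet_ball]
      congr 1 with x
      by_cases hx : ‖x‖ < R <;> simp [hx]
    have h2 : ∫ y in Set.Ioi (0 : ℝ), y ^ (n - 1) • (Set.Iio R).indicator (fun y : ℝ => y ^ (-s)) y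
        = R ^ ((n : ℝ) - s) / (n - s) := by
      calc _ = ∫ y in Set.Ioi (0 : ℝ),
            (Set.Iio R).indicator (fun y : ℝ => y ^ (n - 1) * y ^ (-s)) y := by
            congr 1 with y
            by_cases hy : y < R <;> simp [hy]
        _ = ∫ y in Set.Ioo 0 R, y ^ (n - 1) * y ^ (-s) := by
            rw [setIntegral_indicator measurableSet_Iio, Set.Ioi_inter_Iio]
        _ = ∫ y in Set.Ioo 0 R, y ^ ((n : ℝ) - 1 - s) :=
            setIntegral_congr_fun measurableSet_Ioo hpow
        _ = ∫ y in (0 : ℝ)..R, y ^ ((n : ℝ) - 1 - s) := by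
            rw [intervalIntegral.integral_of_le hR.le, integral_Ioc_eq_integral_Ioo]
        _ = _ := by
            have e : (n : ℝ) - 1 - s + 1 = n - s := by ring
            rw [integral_rpow (Or.inl hexp), e, Real.zero_rpow (by linarith), sub_zero]
    rw [h1, integral_fun_norm_addHaar volume, finrank_euclideanSpace_fin, h2]
    simp
  rw [← ofReal_integral_eq_lintegral_ofReal hint
    (Filter.Eventually.of_forall fun x => by positivity), hval,
    Measure.addHaar_ball_of_pos volume _ hR, ← ofReal_measureReal (s := ball 0 1),
    ← ENNReal.ofReal_mul (by positivity), ← ENNReal.ofReal_mul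
      (mul_nonneg (div_nonneg (by positivity) (by linarith)) (by positivity))]
  congr 1
  rw [finrank_euclideanSpace_fin, sub_eq_add_neg (n : ℝ) s, Real.rpow_add hR, Real.rpow_natCast]
  ring

lemma lintegral_ball_norm_sub_rpow_neg {n : ℕ} (hn : 1 ≤ n) {s : ℝ} (hs : s < n) {R : ℝ}
    (hR : 0 < R) (z : EuclideanSpace ℝ (Fin n)) :
    ∫⁻ x in ball z R, ENNReal.ofReal (‖x - z‖ ^ (-s)) =
      ENNReal.ofReal (n / (n - s) * R ^ (-s)) * volume (ball z R) := by
  rw [Measure.addHaar_ball_center volume z R, ← lintegral_ball_zero_norm_rpow_neg hn hs hR,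
    ← lintegral_indicator measurableSet_ball, ← lintegral_indicator measurableSet_ball,
    ← lintegral_sub_right_eq_self ((ball 0 R).indicator _) z]
  congr 1 with x
  simp [Set.indicator, dist_eq_norm]

/-- Power weights with a single singularity satisfy the `A₂` bound, uniformly in the position of
the singularity. If the centre of the ball is at distance at most `2r` from `z`, the ball lies in
`ball z (3 * r)` and the polar formula applies; otherwise `‖x - z‖` is comparable to `‖c - z‖`. -/
lemma exists_A2_bound_norm_sub_rpow {n : ℕ} (hn : 1 ≤ n) {s : ℝ} (hs0 : 0 ≤ s) (hs : s < n) :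
    ∃ C : ℝ≥0∞, C ≠ ⊤ ∧ ∀ (z c : EuclideanSpace ℝ (Fin n)) (r : ℝ), 0 < r →
      (∫⁻ x in ball c r, ENNReal.ofReal (‖x - z‖ ^ s)) *
        (∫⁻ x in ball c r, ENNReal.ofReal (‖x - z‖ ^ (-s))) ≤ C * volume (ball c r) ^ 2 := by
  have hns : 0 < (n : ℝ) - s := by linarith
  refine ⟨ENNReal.ofReal (n / (n - s) * 3 ^ n) + ENNReal.ofReal (4 ^ s), by finiteness, ?_⟩
  intro z c r hr
  have bound : ∀ (M : ℝ) (f : EuclideanSpace ℝ (Fin n) → ℝ), (∀ x ∈ ball c r, f x ≤ M) →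
      ∫⁻ x in ball c r, ENNReal.ofReal (f x) ≤ ENNReal.ofReal M * volume (ball c r) := by
    intro M f h
    rw [← setLIntegral_const]
    exact setLIntegral_mono' measurableSet_ball fun x hx => ENNReal.ofReal_le_ofReal (h x hx)
  rw [add_mul]
  rcases le_or_gt ‖c - z‖ (2 * r) with hc | hc
  · refine le_add_right ?_
    have hsub : ball c r ⊆ ball z (3 * r) := by
      apply ball_subset_ball'
      rw [dist_eq_norm]; linarith
    have hvol : volume (ball z (3 * r)) = ENNReal.ofReal (3 ^ n) * volume (ball c r) := by
      rw [Measure.addHaar_ball_mul_of_pos volume z (by norm_num : (0 : ℝ) < 3) r,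
        finrank_euclideanSpace_fin, Measure.addHaar_ball_center volume c r]
    have h1 := bound ((3 * r) ^ s) (fun x => ‖x - z‖ ^ s) fun x hx => by
      have := hsub hx
      rw [mem_ball, dist_eq_norm] at this
      exact Real.rpow_le_rpow (norm_nonneg _) this.le hs0
    have h2 : ∫⁻ x in ball c r, ENNReal.ofReal (‖x - z‖ ^ (-s)) ≤
        ENNReal.ofReal (n / (n - s) * (3 * r) ^ (-s)) *
          (ENNReal.ofReal (3 ^ n) * volume (ball c r)) := by
      rw [← hvol, ← lintegral_ball_norm_sub_rpow_neg hn hs (by positivity)]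
      exact lintegral_mono_set hsub
    refine (mul_le_mul' h1 h2).trans_eq ?_
    have e : ENNReal.ofReal (n / (n - s) * 3 ^ n) = ENNReal.ofReal ((3 * r) ^ s) *
        ENNReal.ofReal (n / (n - s) * (3 * r) ^ (-s)) * ENNReal.ofReal (3 ^ n) := by
      rw [← ENNReal.ofReal_mul (by positivity), ← ENNReal.ofReal_mul (by positivity)]
      congr 1
      have : (3 * r) ^ s ≠ 0 := by positivity
      rw [Real.rpow_neg (by positivity)]
      field_simp
    rw [e]; ring
  · refine le_add_left ?_
    set ℓ := ‖c - z‖ with hℓ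
    have hℓ0 : 0 < ℓ := by linarith
    have hx : ∀ x ∈ ball c r, ℓ / 2 ≤ ‖x - z‖ ∧ ‖x - z‖ ≤ 2 * ℓ := by
      intro x hx
      rw [mem_ball, dist_eq_norm] at hx
      have h1 : ‖x - z‖ ≤ ‖x - c‖ + ‖c - z‖ := norm_sub_le_norm_sub_add_norm_sub x c z
      have h2 : ‖c - z‖ ≤ ‖c - x‖ + ‖x - z‖ := norm_sub_le_norm_sub_add_norm_sub c x z
      rw [norm_sub_rev c x] at h2
      constructor <;> linarith
    have h1 := bound ((2 * ℓ) ^ s) (fun x => ‖x - z‖ ^ s) fun x hxB =>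
      Real.rpow_le_rpow (norm_nonneg _) (hx x hxB).2 hs0
    have h2 := bound ((ℓ / 2) ^ (-s)) (fun x => ‖x - z‖ ^ (-s)) fun x hxB =>
      Real.rpow_le_rpow_of_nonpos (by positivity) (hx x hxB).1 (by linarith)
    refine (mul_le_mul' h1 h2).trans_eq ?_
    have e : ENNReal.ofReal (4 ^ s) =
        ENNReal.ofReal ((2 * ℓ) ^ s) * ENNReal.ofReal ((ℓ / 2) ^ (-s)) := by
      rw [← ENNReal.ofReal_mul (by positivity), Real.rpow_neg (by positivity),
        ← Real.inv_rpow (by positivity), ← Real.mul_rpow (by positivity) (by positivity)]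
      congr 2
      field_simp
      norm_num
    rw [e]; ring

/-- The `A₂` bound for a pair `A`, `B` of weights which behave, off `Z`, like `‖x - z‖ ^ s` and
`‖x - z‖ ^ (-s)` near each `z ∈ Z` and are `1` far from `Z`. With `s ≥ 0`, the weight `A` is
dominated by a constant and by a multiple of each `‖x - z‖ ^ s`, whereas `B` is dominated by the
sum of `1` and of all the `‖x - z‖ ^ (-s)`. -/
lemma exists_A2_bound_pair {n : ℕ} (hn : 1 ≤ n) {s : ℝ} (hs0 : 0 ≤ s) (hs : s < n)
    (Z : Finset (EuclideanSpace ℝ (Fin n))) {d : ℝ} (hd : 0 < d)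
    (hsep : ∀ z ∈ Z, ∀ z' ∈ Z, z ≠ z' → d ≤ ‖z - z'‖)
    (A B : EuclideanSpace ℝ (Fin n) → ℝ≥0∞)
    (hnear : ∀ x ∉ Z, ∀ z ∈ Z, ‖x - z‖ < d / 2 →
      A x = ENNReal.ofReal (‖x - z‖ ^ s) ∧ B x = ENNReal.ofReal (‖x - z‖ ^ (-s)))
    (hfar : ∀ x, (∀ z ∈ Z, d / 2 ≤ ‖x - z‖) → A x = 1 ∧ B x = 1) :
    ∃ C : ℝ≥0∞, C ≠ ⊤ ∧ ∀ (c : EuclideanSpace ℝ (Fin n)) (r : ℝ), 0 < r →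
      (∫⁻ x in ball c r, A x) * (∫⁻ x in ball c r, B x) ≤ C * volume (ball c r) ^ 2 := by
  have : Nontrivial (EuclideanSpace ℝ (Fin n)) := by
    have : Nonempty (Fin n) := ⟨⟨0, hn⟩⟩
    infer_instance
  obtain ⟨K, hK, hKb⟩ := exists_A2_bound_norm_sub_rpow hn hs0 hs
  have hZae : ∀ᵐ x : EuclideanSpace ℝ (Fin n), x ∉ Z := by
    rw [ae_iff]
    simpa using Z.finite_toSet.measure_zero volume
  set L : ℝ := 1 + (d / 2) ^ (-s) + (d / 2) ^ s with hL
  have hp1 : 0 < (d / 2) ^ (-s) := by positivity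
  have hp2 : 0 < (d / 2) ^ s := by positivity
  have hL1 : 1 ≤ L := by linarith
  have hAle : ∀ x ∉ Z, A x ≤ ENNReal.ofReal L := by
    intro x hx
    by_cases h : ∀ z ∈ Z, d / 2 ≤ ‖x - z‖
    · rw [(hfar x h).1]
      simpa using hL1
    · push Not at h
      obtain ⟨z, hz, hzx⟩ := h
      rw [(hnear x hx z hz hzx).1]
      apply ENNReal.ofReal_le_ofReal
      have := Real.rpow_le_rpow (norm_nonneg _) hzx.le hs0
      linarith
  have hAle' : ∀ x ∉ Z, ∀ z ∈ Z, A x ≤ ENNReal.ofReal L * ENNReal.ofReal (‖x - z‖ ^ s) := by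
    intro x hx z hz
    rw [← ENNReal.ofReal_mul (by positivity)]
    by_cases h : ∀ z ∈ Z, d / 2 ≤ ‖x - z‖
    · rw [(hfar x h).1, ENNReal.one_le_ofReal]
      calc (1 : ℝ) = (d / 2) ^ (-s) * (d / 2) ^ s := by
            rw [← Real.rpow_add (by positivity)]; simp
        _ ≤ L * ‖x - z‖ ^ s := by
            gcongr
            · linarith
            · exact h z hz
    · push Not at h
      obtain ⟨w, hw, hwx⟩ := h
      rw [(hnear x hx w hw hwx).1]
      apply ENNReal.ofReal_le_ofReal
      -- `w` is a nearest point of `Z` to `x`, because `Z` is `d`-separated.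
      have hwz : ‖x - w‖ ≤ ‖x - z‖ := by
        by_cases hne : w = z
        · rw [hne]
        · have h1 := hsep w hw z hz hne
          have h2 : ‖w - z‖ ≤ ‖w - x‖ + ‖x - z‖ := norm_sub_le_norm_sub_add_norm_sub w x z
          rw [norm_sub_rev w x] at h2
          linarith
      calc ‖x - w‖ ^ s ≤ ‖x - z‖ ^ s := Real.rpow_le_rpow (norm_nonneg _) hwz hs0
        _ ≤ L * ‖x - z‖ ^ s := le_mul_of_one_le_left (by positivity) hL1
  have hBle : ∀ x ∉ Z, B x ≤ (∑ z ∈ Z, ENNReal.ofReal (‖x - z‖ ^ (-s))) + 1 := by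
    intro x hx
    by_cases h : ∀ z ∈ Z, d / 2 ≤ ‖x - z‖
    · rw [(hfar x h).2]
      exact le_add_self
    · push Not at h
      obtain ⟨z, hz, hzx⟩ := h
      rw [(hnear x hx z hz hzx).2]
      exact le_add_right (Finset.single_le_sum
        (f := fun z => ENNReal.ofReal (‖x - z‖ ^ (-s))) (fun _ _ => zero_le) hz)
  have hmeas : ∀ (t : ℝ) (z : EuclideanSpace ℝ (Fin n)),
      Measurable fun x => ENNReal.ofReal (‖x - z‖ ^ t) := by
    intro t z
    fun_prop
  refine ⟨Z.card * (ENNReal.ofReal L * K) + ENNReal.ofReal L, by finiteness, ?_⟩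
  intro c r hr
  have iA : ∫⁻ x in ball c r, A x ≤ ENNReal.ofReal L * volume (ball c r) := by
    rw [← setLIntegral_const]
    exact setLIntegral_mono_ae' measurableSet_ball (hZae.mono fun x hx _ => hAle x hx)
  have iA' : ∀ z ∈ Z, ∫⁻ x in ball c r, A x ≤
      ENNReal.ofReal L * ∫⁻ x in ball c r, ENNReal.ofReal (‖x - z‖ ^ s) := by
    intro z hz
    rw [← lintegral_const_mul _ (hmeas s z)]
    exact setLIntegral_mono_ae' measurableSet_ball (hZae.mono fun x hx _ => hAle' x hx z hz)
  have iB : ∫⁻ x in ball c r, B x ≤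
      (∑ z ∈ Z, ∫⁻ x in ball c r, ENNReal.ofReal (‖x - z‖ ^ (-s))) + volume (ball c r) := by
    calc _ ≤ ∫⁻ x in ball c r, ((∑ z ∈ Z, ENNReal.ofReal (‖x - z‖ ^ (-s))) + 1) :=
          setLIntegral_mono_ae' measurableSet_ball (hZae.mono fun x hx _ => hBle x hx)
      _ = _ := by
          rw [lintegral_add_right _ measurable_const, lintegral_finsetSum _ fun z _ => hmeas (-s) z,
            setLIntegral_one]
  calc (∫⁻ x in ball c r, A x) * (∫⁻ x in ball c r, B x)
      ≤ (∫⁻ x in ball c r, A x) *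
        ((∑ z ∈ Z, ∫⁻ x in ball c r, ENNReal.ofReal (‖x - z‖ ^ (-s))) + volume (ball c r)) := by
        gcongr
    _ = (∑ z ∈ Z, (∫⁻ x in ball c r, A x) *
          ∫⁻ x in ball c r, ENNReal.ofReal (‖x - z‖ ^ (-s))) +
        (∫⁻ x in ball c r, A x) * volume (ball c r) := by
        rw [mul_add, Finset.mul_sum]
    _ ≤ (∑ z ∈ Z, ENNReal.ofReal L * (K * volume (ball c r) ^ 2)) +
        ENNReal.ofReal L * volume (ball c r) * volume (ball c r) := by
        refine add_le_add (Finset.sum_le_sum fun z hz => ?_) (mul_le_mul' iA le_rfl)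
        calc _ ≤ ENNReal.ofReal L * (∫⁻ x in ball c r, ENNReal.ofReal (‖x - z‖ ^ s)) *
              ∫⁻ x in ball c r, ENNReal.ofReal (‖x - z‖ ^ (-s)) := by
              gcongr
              exact iA' z hz
          _ ≤ _ := by
              rw [mul_assoc]
              exact mul_le_mul' le_rfl (hKb z c r hr)
    _ = _ := by
        rw [Finset.sum_const, nsmul_eq_mul]
        ring

/-- Let `Z ⊂ ℝⁿ` be finite with at least two elements, `d` the minimal distance between
distinct points of `Z`, and `α ∈ (-n, n)`. The weight `ρ`, equal to `|x - z|^α` whenever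
`|x - z| < d/2` for some (necessarily unique) `z ∈ Z` and equal to `1` otherwise, satisfies
the Muckenhoupt `A₂` condition. -/
theorem multipoint_weight_isA2 (n : ℕ) (hn : 2 ≤ n)
    (Z : Set (EuclideanSpace ℝ (Fin n))) (hZfin : Z.Finite) (hZ2 : Z.Nontrivial)
    (d : ℝ) (hd : IsLeast {t : ℝ | ∃ z ∈ Z, ∃ z' ∈ Z, z ≠ z' ∧ t = ‖z - z'‖} d)
    (α : ℝ) (hα₁ : -(n : ℝ) < α) (hα₂ : α < n)
    (ρ : EuclideanSpace ℝ (Fin n) → ℝ≥0∞)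
    (hρ₁ : ∀ x z, z ∈ Z → ‖x - z‖ < d / 2 → ρ x = ENNReal.ofReal (‖x - z‖ ^ α))
    (hρ₂ : ∀ x, (∀ z ∈ Z, d / 2 ≤ ‖x - z‖) → ρ x = 1) :
    IsA2 ρ := by
  have hd0 : 0 < d := by
    obtain ⟨z, -, z', -, hne, rfl⟩ := hd.1
    exact norm_pos_iff.2 (sub_ne_zero.2 hne)
  lift Z to Finset (EuclideanSpace ℝ (Fin n)) using hZfin
  simp only [Finset.mem_coe] at *
  have hsep : ∀ z ∈ Z, ∀ z' ∈ Z, z ≠ z' → d ≤ ‖z - z'‖ := fun z hz z' hz' hne =>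
    hd.2 ⟨z, hz, z', hz', hne, rfl⟩
  have hinv : ∀ x ∉ Z, ∀ z ∈ Z, ‖x - z‖ < d / 2 →
      (ρ x)⁻¹ = ENNReal.ofReal (‖x - z‖ ^ (-α)) := by
    intro x hx z hz hzx
    have h0 : 0 < ‖x - z‖ := norm_pos_iff.2 (sub_ne_zero.2 fun h => hx (h ▸ hz))
    rw [hρ₁ x z hz hzx, ← ENNReal.ofReal_inv_of_pos (by positivity), Real.rpow_neg h0.le]
  -- The finite bound `C` may vanish a priori, so `C + 1` serves as the positive constant.
  suffices h : ∃ C : ℝ≥0∞, C ≠ ⊤ ∧ ∀ (c : EuclideanSpace ℝ (Fin n)) (r : ℝ), 0 < r →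
      (∫⁻ x in ball c r, ρ x) * (∫⁻ x in ball c r, (ρ x)⁻¹) ≤ C * volume (ball c r) ^ 2 by
    obtain ⟨C, hC, h⟩ := h
    refine ⟨C + 1, by positivity, by finiteness, fun c r hr => (h c r hr).trans ?_⟩
    gcongr
    exact le_self_add
  rcases le_total 0 α with hα | hα
  · exact exists_A2_bound_pair (by lia) hα hα₂ Z hd0 hsep ρ (fun x => (ρ x)⁻¹)
      (fun x hx z hz hzx => ⟨hρ₁ x z hz hzx, hinv x hx z hz hzx⟩)
      (fun x hx => by simp [hρ₂ x hx])
  · obtain ⟨C, hC, h⟩ := exists_A2_bound_pair (s := -α) (by lia) (by linarith) (by linarith) Z hd0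
      hsep (fun x => (ρ x)⁻¹) ρ
      (fun x hx z hz hzx => ⟨hinv x hx z hz hzx, by rw [neg_neg]; exact hρ₁ x z hz hzx⟩)
      (fun x hx => by simp [hρ₂ x hx])
    exact ⟨C, hC, fun c r hr => by rw [mul_comm]; exact h c r hr⟩
end

section
/- Let n ∈ {2,3}, let Ω ⊂ ℝⁿ be a bounded open set, let Z ⊂ Ω be a finite set with at least two elements, let d = min{|z − z′| : z, z′ ∈ Z, z ≠ z′}, and let α ∈ (n−2, 2). Define ρ(x) = |x − z|^α if |x − z| < d/2 for some z ∈ Z, and ρ(x) = 1 otherwise. Then there exists a constant C > 0, depending only on Ω, Z and α, such that for every v ∈ C_c^∞(Ω): ∫_Ω |v(x)|² dx ≤ C ∫_Ω ρ(x)|∇v(x)|² dx. (This is the weighted Poincaré inequality for the multiple-point weight ρ, which is the content of the embedding H¹₀(ρ, Ω) ↪ L²(Ω) used for the adjoint state, H¹₀(ρ, Ω) being the closure of C_c^∞(Ω) in the weighted H¹-norm.) -/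
/-!
The proof is a vector field argument. If `X` is a smooth vector field with `div X = 1`, integration
by parts gives `∫ v² = -2 ∫ v (X · ∇v)`, hence `∫ v² ≤ 4 ∫ (X · ∇v)²`; so it suffices that
`|X|² ≤ C ρ` on `Ω`. As `α < 2`, this holds as soon as `X` is Lipschitz and vanishes on `Z`.

In dimension at least two such a field exists with a constant direction, `X = g e`
(`exists_field_vanishing_on_finite`). Choose a linear form `f` injective on `Z`, a vector
`e ≠ 0` in its kernel, a linear form `h` with `h e = 1` and a polynomial `p` with
`p (f z) = h z` for `z ∈ Z`. Then `g x = h x - p (f x)` vanishes on `Z`, and its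
derivative along `e` is identically `1` because `f e = 0`.

The integral of `ρ |∇v|²` would be `0` by convention if the integrand were not integrable, so the
measurability and boundedness of `ρ` are needed. Both follow from `ρ` being a function of the
distance to `Z`.
-/

open MeasureTheory Metric

/-- A finite set in dimension at least two lies in the zero set of a smooth function whose
derivative in some fixed direction is identically `1`. -/
lemma exists_field_vanishing_on_finite {E : Type*} [NormedAddCommGroup E] [InnerProductSpace ℝ E]
    [FiniteDimensional ℝ E] (hE : 2 ≤ Module.finrank ℝ E) {Z : Set E} (hZ : Z.Finite) :
    ∃ (g : E → ℝ) (e : E), ContDiff ℝ 1 g ∧ (∀ z ∈ Z, g z = 0) ∧ ∀ x, fderiv ℝ g x e = 1 := by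
  classical
  -- A linear form separating the points of `Z`: it must not vanish on any of their differences.
  have : Finite {p : E × E // p ∈ Z ×ˢ Z ∧ p.1 ≠ p.2} :=
    ((hZ.prod hZ).subset (fun p hp => hp.1)).to_subtype
  obtain ⟨f₀, hf₀⟩ := Module.exists_dual_forall_apply_ne_zero (K := ℝ)
    (fun p : {p : E × E // p ∈ Z ×ˢ Z ∧ p.1 ≠ p.2} => p.1.1 - p.1.2)
    (fun p => sub_ne_zero.2 p.2.2)
  let f : E →L[ℝ] ℝ := LinearMap.toContinuousLinearMap f₀
  have hff : ∀ x, f x = f₀ x := fun x => rfl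
  have hinj : Set.InjOn f (hZ.toFinset : Set E) := by
    intro x hx y hy hxy
    by_contra hne
    have hx' : x ∈ Z := by simpa using hx
    have hy' : y ∈ Z := by simpa using hy
    apply hf₀ ⟨(x, y), ⟨hx', hy'⟩, hne⟩
    simpa [sub_eq_zero, hff] using hxy
  obtain ⟨e, he, he0⟩ := (Submodule.ne_bot_iff _).1
    (LinearMap.ker_ne_bot_of_finrank_lt (f := f₀) (by simp; omega))
  have hfe : f e = 0 := he
  let h : E →L[ℝ] ℝ := (‖e‖ ^ 2)⁻¹ • innerSL ℝ e
  have hhe : h e = 1 := by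
    have : ‖e‖ ≠ 0 := norm_ne_zero_iff.2 he0
    simp [h, this]
  let p : Polynomial ℝ := Lagrange.interpolate hZ.toFinset f h
  refine ⟨fun x => h x - p.eval (f x), e, ?_, ?_, ?_⟩
  · have hp : ContDiff ℝ 1 (fun t : ℝ => p.eval t) := by
      simpa using p.contDiff_aeval (𝕜 := ℝ) 1
    exact h.contDiff.sub (hp.comp f.contDiff)
  · intro z hz
    have : p.eval (f z) = h z := Lagrange.eval_interpolate_at_node _ hinj (by simpa using hz)
    simp [this]
  · intro x
    have h1 : HasFDerivAt (fun x => h x - p.eval (f x)) (h - (p.derivative.eval (f x)) • f) x :=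
      h.hasFDerivAt.sub ((p.hasDerivAt (f x)).comp_hasFDerivAt x f.hasFDerivAt)
    rw [h1.fderiv]
    simp [hfe, hhe]

/-- The inequality `∫ v² ≤ 4 ∫ g² (∂ₑv)²` for the field `g e` of divergence one. -/
lemma integral_sq_le_of_fderiv_eq_one {E : Type*} [NormedAddCommGroup E] [InnerProductSpace ℝ E]
    [FiniteDimensional ℝ E] [MeasurableSpace E] [BorelSpace E] (μ : Measure E)
    [μ.IsAddHaarMeasure] {g v : E → ℝ} {e : E} (hg : ContDiff ℝ 1 g)
    (hge : ∀ x, fderiv ℝ g x e = 1) (hv : ContDiff ℝ 1 v) (hvc : HasCompactSupport v) :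
    ∫ x, v x ^ 2 ∂μ ≤ 4 * ∫ x, (g x * fderiv ℝ v x e) ^ 2 ∂μ := by
  have hdc : Continuous (fun x => fderiv ℝ v x e) :=
    (hv.continuous_fderiv one_ne_zero).clm_apply continuous_const
  have hsq : ∀ x, fderiv ℝ (fun y => v y ^ 2) x e = 2 * v x * fderiv ℝ v x e := by
    intro x
    have := ((hv.differentiable one_ne_zero x).hasFDerivAt.pow 2).fderiv
    rw [this]
    simp
  have hdsupp : HasCompactSupport (fun x => fderiv ℝ v x e) := hvc.fderiv_apply ℝ e
  have hvc2 : HasCompactSupport (fun x => v x ^ 2) :=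
    HasCompactSupport.intro hvc fun x hx => by simp [image_eq_zero_of_notMem_tsupport hx]
  have i1 : Integrable (fun x => v x ^ 2) μ :=
    (hv.continuous.pow 2).integrable_of_hasCompactSupport hvc2
  have i2 : Integrable (fun x => g x * (2 * v x * fderiv ℝ v x e)) μ := by
    refine Continuous.integrable_of_hasCompactSupport ?_ ?_
    · exact hg.continuous.mul ((continuous_const.mul hv.continuous).mul hdc)
    · exact HasCompactSupport.mul_left (HasCompactSupport.mul_left hdsupp)
  have i3 : Integrable (fun x => (g x * fderiv ℝ v x e) ^ 2) μ := by
    refine Continuous.integrable_of_hasCompactSupport ((hg.continuous.mul hdc).pow 2) ?_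
    exact HasCompactSupport.intro hdsupp fun x hx => by
      simp [image_eq_zero_of_notMem_tsupport hx]
  have i4 : Integrable (fun x => g x * v x ^ 2) μ := by
    refine Continuous.integrable_of_hasCompactSupport
      (hg.continuous.mul (hv.continuous.pow 2)) ?_
    exact HasCompactSupport.mul_left hvc2
  have ibp := integral_mul_fderiv_eq_neg_fderiv_mul_of_integrable (μ := μ) (f := g)
    (g := fun y => v y ^ 2) (v := e) (by simpa [hge] using i1) (by simpa only [hsq] using i2) i4
    (fun x _ => hg.differentiable one_ne_zero x)
    (fun x _ => (hv.differentiable one_ne_zero x).pow 2)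
  simp only [hge, hsq, one_mul] at ibp
  have hle : ∫ x, -(g x * (2 * v x * fderiv ℝ v x e)) ∂μ ≤
      ∫ x, (1 / 2 * v x ^ 2 + 2 * (g x * fderiv ℝ v x e) ^ 2) ∂μ := by
    refine integral_mono i2.neg ((i1.const_mul _).add (i3.const_mul _)) fun x => ?_
    dsimp only
    nlinarith [sq_nonneg (v x + 2 * (g x * fderiv ℝ v x e))]
  rw [integral_neg, integral_add (i1.const_mul _) (i3.const_mul _), integral_const_mul,
    integral_const_mul] at hle
  linarith

/-- Weighted Poincaré inequality for the multiple-point weight `ρ`: for `n ∈ {2,3}`,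
`Ω ⊂ ℝⁿ` bounded open, `Z ⊂ Ω` finite with at least two elements, `d` the minimal distance
between distinct points of `Z`, `α ∈ (n-2, 2)`, and `ρ` equal to `|x - z|^α` when
`|x - z| < d/2` for some `z ∈ Z` and to `1` otherwise, there is `C > 0` with
`∫_Ω v² ≤ C ∫_Ω ρ |∇v|²` for all `v ∈ C_c^∞(Ω)`. This is the content of the embedding
`H¹₀(ρ, Ω) ↪ L²(Ω)` used for the adjoint state. -/
theorem weighted_poincare_multipoint (n : ℕ) (hn : n = 2 ∨ n = 3)
    (Ω : Set (EuclideanSpace ℝ (Fin n))) (hΩo : IsOpen Ω) (hΩb : Bornology.IsBounded Ω)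
    (Z : Set (EuclideanSpace ℝ (Fin n))) (hZΩ : Z ⊆ Ω) (hZfin : Z.Finite)
    (hZ2 : Z.Nontrivial)
    (d : ℝ) (hd : IsLeast {t : ℝ | ∃ z ∈ Z, ∃ z' ∈ Z, z ≠ z' ∧ t = ‖z - z'‖} d)
    (α : ℝ) (hα₁ : (n : ℝ) - 2 < α) (hα₂ : α < 2)
    (ρ : EuclideanSpace ℝ (Fin n) → ℝ)
    (hρ₁ : ∀ x z, z ∈ Z → ‖x - z‖ < d / 2 → ρ x = ‖x - z‖ ^ α)
    (hρ₂ : ∀ x, (∀ z ∈ Z, d / 2 ≤ ‖x - z‖) → ρ x = 1) :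
    ∃ C : ℝ, 0 < C ∧
      ∀ v : EuclideanSpace ℝ (Fin n) → ℝ,
        ContDiff ℝ (⊤ : ℕ∞) v → HasCompactSupport v → tsupport v ⊆ Ω →
        ∫ x in Ω, (v x) ^ 2 ≤ C * ∫ x in Ω, ρ x * ‖gradient v x‖ ^ 2 := by
  have hα : 0 < α := by
    have : (2 : ℝ) ≤ n := by rcases hn with rfl | rfl <;> norm_num
    linarith
  obtain ⟨g, e, hg, hgZ, hge⟩ := exists_field_vanishing_on_finite
    (E := EuclideanSpace ℝ (Fin n)) (by rcases hn with rfl | rfl <;> simp) hZfin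
  -- `ρ` only depends on the distance `r` to a nearest point `z` of `Z`.
  have hnear : ∀ x, ∃ z ∈ Z, infDist x Z = ‖x - z‖ ∧
      ρ x = if infDist x Z < d / 2 then infDist x Z ^ α else 1 := by
    intro x
    obtain ⟨z, hz, hxz⟩ := hZfin.isCompact.exists_infDist_eq_dist hZ2.nonempty x
    refine ⟨z, hz, by rw [hxz, dist_eq_norm], ?_⟩
    split_ifs with hlt
    · rw [hxz, dist_eq_norm] at hlt ⊢
      exact hρ₁ x z hz hlt
    · refine hρ₂ x fun y hy => (not_lt.1 hlt).trans ?_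
      rw [← dist_eq_norm]
      exact infDist_le_dist_of_mem hy
  have hρm : Measurable ρ := by
    have : ρ = fun x => if infDist x Z < d / 2 then infDist x Z ^ α else 1 :=
      funext fun x => (hnear x).choose_spec.2.2
    rw [this]
    exact Measurable.ite (measurableSet_lt measurable_infDist measurable_const)
      (measurable_infDist.pow_const α) measurable_const
  have hρb : ∀ x, ‖ρ x‖ ≤ |d / 2| ^ α + 1 := by
    intro x
    obtain ⟨z, -, -, hx⟩ := hnear x
    have h0 : 0 ≤ |d / 2| ^ α := by positivity
    rw [hx]
    split_ifs with hlt
    · rw [Real.norm_of_nonneg (Real.rpow_nonneg infDist_nonneg _)]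
      have := Real.rpow_le_rpow infDist_nonneg (hlt.le.trans (le_abs_self _)) hα.le
      linarith
    · simpa using h0
  obtain ⟨R, hR⟩ := hΩb.subset_closedBall 0
  -- On a ball containing `Ω` the function `g` is Lipschitz.
  obtain ⟨L, hL⟩ := (isCompact_closedBall (0 : EuclideanSpace ℝ (Fin n)) R).exists_bound_of_continuousOn
    (hg.continuous_fderiv one_ne_zero).continuousOn
  have hLip : ∀ x ∈ Ω, ∀ z ∈ Z, |g x| ≤ L * ‖x - z‖ := by
    intro x hx z hz
    have := (convex_closedBall (0 : EuclideanSpace ℝ (Fin n)) R).norm_image_sub_le_of_norm_fderiv_le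
      (fun y _ => hg.differentiable one_ne_zero y) hL (hR (hZΩ hz)) (hR hx)
    simpa [hgZ z hz] using this
  have hbound : ∀ x ∈ Ω, g x ^ 2 ≤ (L ^ 2 * (|d / 2| ^ (2 - α) + (2 * R) ^ 2)) * ρ x := by
    intro x hx
    obtain ⟨z, hz, hr, hρx⟩ := hnear x
    have hgx := hLip x hx z hz
    have h1 : g x ^ 2 ≤ L ^ 2 * ‖x - z‖ ^ 2 := by
      rw [← sq_abs, ← mul_pow]
      exact pow_le_pow_left₀ (abs_nonneg _) hgx 2
    refine h1.trans ?_
    rw [mul_assoc]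
    refine mul_le_mul_of_nonneg_left ?_ (sq_nonneg L)
    rw [hρx, hr]
    split_ifs with hlt
    · have h2 : ‖x - z‖ ^ 2 = ‖x - z‖ ^ (2 - α) * ‖x - z‖ ^ α := by
        rw [← Real.rpow_add_of_nonneg (norm_nonneg _) (by linarith) hα.le]
        simp
      rw [h2]
      refine mul_le_mul_of_nonneg_right ?_ (Real.rpow_nonneg (norm_nonneg _) _)
      have := Real.rpow_le_rpow (norm_nonneg (x - z)) (hlt.le.trans (le_abs_self _))
        (by linarith : 0 ≤ 2 - α)
      nlinarith [sq_nonneg R]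
    · have hxR : ‖x‖ ≤ R := by simpa using hR hx
      have hzR : ‖z‖ ≤ R := by simpa using hR (hZΩ hz)
      have h3 : ‖x - z‖ ≤ 2 * R := (norm_sub_le x z).trans (by linarith)
      have := pow_le_pow_left₀ (norm_nonneg _) h3 2
      have h0 : 0 ≤ |d / 2| ^ (2 - α) := by positivity
      linarith
  set K : ℝ := L ^ 2 * (|d / 2| ^ (2 - α) + (2 * R) ^ 2) with hK
  have hK0 : 0 ≤ K := by positivity
  have hρ0 : ∀ x, 0 ≤ ρ x := by
    intro x
    obtain ⟨z, -, -, hx⟩ := hnear x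
    rw [hx]
    split_ifs
    · exact Real.rpow_nonneg infDist_nonneg _
    · exact zero_le_one
  refine ⟨4 * (K * ‖e‖ ^ 2) + 1, by positivity, fun v hv hvc hvΩ => ?_⟩
  have hv1 : ContDiff ℝ 1 v := hv.of_le (by exact_mod_cast le_top)
  have hgrad : ∀ x, ‖gradient v x‖ = ‖fderiv ℝ v x‖ := fun x => by simp [gradient]
  have hout : ∀ x, x ∉ Ω → fderiv ℝ v x = 0 := fun x hx =>
    image_eq_zero_of_notMem_tsupport fun h => hx (hvΩ (tsupport_fderiv_subset ℝ h))
  have hI : Integrable (fun x => ρ x * ‖fderiv ℝ v x‖ ^ 2) := by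
    refine Integrable.bdd_mul ?_ hρm.aestronglyMeasurable (.of_forall hρb)
    refine ((hv1.continuous_fderiv one_ne_zero).norm.pow 2).integrable_of_hasCompactSupport ?_
    exact HasCompactSupport.intro (hvc.fderiv ℝ) fun x hx => by
      simp [image_eq_zero_of_notMem_tsupport hx]
  have e1 : ∫ x in Ω, v x ^ 2 = ∫ x, v x ^ 2 :=
    setIntegral_eq_integral_of_forall_compl_eq_zero fun x hx => by
      simp [image_eq_zero_of_notMem_tsupport fun h => hx (hvΩ h)]
  have e2 : ∫ x in Ω, ρ x * ‖gradient v x‖ ^ 2 = ∫ x, ρ x * ‖fderiv ℝ v x‖ ^ 2 := by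
    simp only [hgrad]
    exact setIntegral_eq_integral_of_forall_compl_eq_zero fun x hx => by simp [hout x hx]
  rw [e1, e2]
  have hmain : ∫ x, (g x * fderiv ℝ v x e) ^ 2 ≤
      ∫ x, (K * ‖e‖ ^ 2) * (ρ x * ‖fderiv ℝ v x‖ ^ 2) := by
    refine integral_mono_of_nonneg (.of_forall fun x => sq_nonneg _) (hI.const_mul _)
      (.of_forall fun x => ?_)
    dsimp only
    by_cases hx : x ∈ Ω
    · have h1 : (fderiv ℝ v x e) ^ 2 ≤ (‖fderiv ℝ v x‖ * ‖e‖) ^ 2 := by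
        rw [← sq_abs]
        exact pow_le_pow_left₀ (abs_nonneg _) ((fderiv ℝ v x).le_opNorm e) 2
      calc (g x * fderiv ℝ v x e) ^ 2 = g x ^ 2 * (fderiv ℝ v x e) ^ 2 := mul_pow _ _ _
        _ ≤ (K * ρ x) * (‖fderiv ℝ v x‖ * ‖e‖) ^ 2 :=
          mul_le_mul (hbound x hx) h1 (sq_nonneg _) (mul_nonneg hK0 (hρ0 x))
        _ = _ := by ring
    · simp [hout x hx]
  rw [integral_const_mul] at hmain
  have h2 := integral_sq_le_of_fderiv_eq_one volume hg hge hv1 hvc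
  have h3 : 0 ≤ ∫ x, ρ x * ‖fderiv ℝ v x‖ ^ 2 :=
    integral_nonneg fun x => mul_nonneg (hρ0 x) (sq_nonneg _)
  linarith
end
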